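/- The ℓ-flag polynomial of the standard simplex Δ_{r-1} satisfies x_1 · f̃^ℓ_{Δ_{r-1}}(x_1,…,x_ℓ) = (x_1 + x_2 + ⋯ + x_ℓ + 1)^r − (x_2 + ⋯ + x_ℓ + 1)^r. -/

import Mathlib

open Classical MvPolynomial

/-- Weights: `X i` at `i`, and `1` at the top. -/
noncomputable def flagWt (n : ℕ) : WithTop (Fin n) → MvPolynomial (Fin n) ℤ :=
  fun o => Option.elim o 1 X

theorem flag_prod (r n : ℕ) (c : Fin r → WithTop (Fin n)) :
    ∏ a, flagWt n (c a)
      = ∏ i : Fin n, (X i : MvPolynomial (Fin n) ℤ) ^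
        (Finset.univ.filter (fun a => c a = (i : WithTop (Fin n)))).card := by
  have h := Finset.prod_fiberwise (s := (Finset.univ : Finset (Fin r))) c
    (fun a => flagWt n (c a))
  rw [← h]
  have h2 : ∀ o : WithTop (Fin n),
      ∏ a ∈ Finset.univ.filter (fun a => c a = o), flagWt n (c a)
        = flagWt n o ^ (Finset.univ.filter (fun a => c a = o)).card := by
    intro o
    apply Finset.prod_eq_pow_card
    intro a ha
    rw [(Finset.mem_filter.1 ha).2]
  simp only [h2]
  refine (Fintype.prod_option (α := Fin n) _).trans ?_
  have h3 : flagWt n (none : Option (Fin n)) = 1 := rfl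
  rw [h3, one_pow, one_mul]
  apply Finset.prod_congr rfl
  intro i _
  rfl

theorem flag_min_le (r n : ℕ) (T : Fin n → Finset (Fin r))
    (hT : ∀ i j : Fin n, i ≤ j → T i ⊆ T j) (a : Fin r) (i : Fin n) :
    (Finset.univ.filter (fun j => a ∈ T j)).min ≤ (i : WithTop (Fin n)) ↔ a ∈ T i := by
  constructor
  · intro h
    obtain ⟨m, hm⟩ := WithTop.ne_top_iff_exists.1 (ne_top_of_le_ne_top WithTop.coe_ne_top h)
    have hmem := Finset.mem_of_min hm.symm
    rw [← hm, WithTop.coe_le_coe] at h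
    exact hT m i h (Finset.mem_filter.1 hmem).2
  · intro h
    exact Finset.min_le (by simp [h])

theorem flag_min_eq (n : ℕ) (o : WithTop (Fin n)) :
    (Finset.univ.filter (fun j : Fin n => o ≤ (j : WithTop (Fin n)))).min = o := by
  apply le_antisymm
  · induction o with
    | top => exact le_top
    | coe m => exact Finset.min_le (by simp)
  · apply Finset.le_min
    intro j hj
    exact (Finset.mem_filter.1 hj).2

/-- The `ℓ`-flag polynomial of the standard simplex `Δ_{r-1}` satisfies
`x₁ · f̃^ℓ_{Δ_{r-1}}(x₁,…,x_ℓ) = (x₁ + ⋯ + x_ℓ + 1)^r − (x₂ + ⋯ + x_ℓ + 1)^r`.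
Faces of `Δ_{r-1}` are nonempty subsets of `[r]`; a chain of faces
`T 0 ⊆ ⋯ ⊆ T (ℓ-1)` contributes the monomial
`∏ i, x_i ^ (dim (T i) - dim (T (i-1)))` where `dim` is `card - 1`
(with the convention that the exponent of the first variable is `dim (T 0)`). -/
theorem stmt2 (r ℓ : ℕ) (hℓ : 1 ≤ ℓ) :
    (MvPolynomial.X ⟨0, hℓ⟩ : MvPolynomial (Fin ℓ) ℤ) *
      ∑ T ∈ Finset.univ.filter (fun T : Fin ℓ → Finset (Fin r) =>
          (∀ i j : Fin ℓ, i ≤ j → T i ⊆ T j) ∧ ∀ i : Fin ℓ, (T i).Nonempty),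
        ∏ i : Fin ℓ,
          (MvPolynomial.X i : MvPolynomial (Fin ℓ) ℤ) ^
            ((T i).card -
              (if i.val = 0 then 1
               else (T ⟨i.val - 1, Nat.lt_of_le_of_lt (Nat.sub_le _ _) i.isLt⟩).card))
    = (∑ i : Fin ℓ, MvPolynomial.X i + 1) ^ r -
        (∑ i ∈ Finset.univ.filter (fun i : Fin ℓ => i.val ≠ 0), MvPolynomial.X i + 1) ^ r := by
  obtain ⟨n, rfl⟩ : ∃ n, ℓ = n + 1 := ⟨ℓ - 1, by omega⟩
  have e1 : (∑ i : Fin (n+1), (X i : MvPolynomial (Fin (n+1)) ℤ) + 1) ^ r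
      = ∑ c : Fin r → WithTop (Fin (n+1)), ∏ a, flagWt (n+1) (c a) := by
    have h : (∑ i : Fin (n+1), (X i : MvPolynomial (Fin (n+1)) ℤ) + 1)
        = ∑ o : WithTop (Fin (n+1)), flagWt (n+1) o := by
      refine (add_comm _ _).trans ?_
      exact (Fintype.sum_option (α := Fin (n+1)) (fun o => flagWt (n+1) o)).symm
    rw [h, ← Fintype.piFinset_univ, ← Finset.prod_univ_sum]
    simp
  have e2 : (∑ i ∈ Finset.univ.filter (fun i : Fin (n+1) => i.val ≠ 0),
        (X i : MvPolynomial (Fin (n+1)) ℤ) + 1) ^ r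
      = ∑ c ∈ Finset.univ.filter (fun c : Fin r → WithTop (Fin (n+1)) =>
          ¬ ∃ a, c a = ((0 : Fin (n+1)) : WithTop (Fin (n+1)))), ∏ a, flagWt (n+1) (c a) := by
    have h : (∑ i ∈ Finset.univ.filter (fun i : Fin (n+1) => i.val ≠ 0),
        (X i : MvPolynomial (Fin (n+1)) ℤ) + 1)
        = ∑ o ∈ Finset.univ.filter (fun o : WithTop (Fin (n+1)) =>
            o ≠ ((0 : Fin (n+1)) : WithTop (Fin (n+1)))), flagWt (n+1) o := by
      refine (add_comm _ _).trans ?_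
      rw [Finset.sum_filter, Finset.sum_filter]
      refine Eq.symm ((Fintype.sum_option (α := Fin (n+1)) _).trans ?_)
      congr 1
      apply Finset.sum_congr rfl
      intro i _
      have hi : ((some i : Option (Fin (n+1))) : WithTop (Fin (n+1)))
          ≠ ((0 : Fin (n+1)) : WithTop (Fin (n+1))) ↔ i.val ≠ 0 := by
        have : ((i : WithTop (Fin (n+1))) ≠ ((0 : Fin (n+1)) : WithTop (Fin (n+1))))
            ↔ i.val ≠ 0 := by
          rw [Ne, WithTop.coe_inj, Fin.ext_iff]; rfl
        exact this
      by_cases hv : i.val ≠ 0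
      · rw [if_pos hv]
        exact if_pos (hi.2 hv)
      · rw [if_neg hv]
        exact if_neg (fun h => hv (hi.1 h))
    have h2 : Finset.univ.filter (fun c : Fin r → WithTop (Fin (n+1)) =>
          ¬ ∃ a, c a = ((0 : Fin (n+1)) : WithTop (Fin (n+1))))
        = Fintype.piFinset (fun _ : Fin r => Finset.univ.filter (fun o : WithTop (Fin (n+1)) =>
            o ≠ ((0 : Fin (n+1)) : WithTop (Fin (n+1))))) := by
      ext c
      simp
    rw [h, h2, ← Finset.prod_univ_sum]
    simp
  rw [e1, e2, ← Finset.sum_filter_add_sum_filter_not Finset.univ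
    (fun c : Fin r → WithTop (Fin (n+1)) =>
          ∃ a, c a = ((0 : Fin (n+1)) : WithTop (Fin (n+1)))), add_sub_cancel_right,
    Finset.mul_sum]
  symm
  have le0 : ∀ o : WithTop (Fin (n+1)), o ≤ ((0 : Fin (n+1)) : WithTop (Fin (n+1))) ↔
      o = ((0 : Fin (n+1)) : WithTop (Fin (n+1))) := by
    intro o
    constructor
    · intro h
      obtain ⟨m, rfl⟩ := WithTop.ne_top_iff_exists.1 (ne_top_of_le_ne_top WithTop.coe_ne_top h)
      rw [WithTop.coe_le_coe] at h
      rw [WithTop.coe_inj]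
      exact le_antisymm h (Fin.zero_le _)
    · rintro rfl
      exact le_rfl
  refine Finset.sum_bij'
    (fun c _ => fun i : Fin (n+1) =>
      Finset.univ.filter (fun a => c a ≤ (i : WithTop (Fin (n+1)))))
    (fun T _ => fun a => (Finset.univ.filter (fun j => a ∈ T j)).min) ?_ ?_ ?_ ?_ ?_
  · intro c hc
    obtain ⟨a, ha⟩ := (Finset.mem_filter.1 hc).2
    refine Finset.mem_filter.2 ⟨Finset.mem_univ _, ?_, ?_⟩
    · intro i j hij b hb
      refine Finset.mem_filter.2 ⟨Finset.mem_univ _, ?_⟩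
      exact (Finset.mem_filter.1 hb).2.trans (WithTop.coe_le_coe.2 hij)
    · intro i
      refine ⟨a, Finset.mem_filter.2 ⟨Finset.mem_univ _, ?_⟩⟩
      rw [ha]
      exact WithTop.coe_le_coe.2 (Fin.zero_le _)
  · intro T hT
    obtain ⟨-, hT1, hT2⟩ := Finset.mem_filter.1 hT
    obtain ⟨a, ha⟩ := hT2 0
    refine Finset.mem_filter.2 ⟨Finset.mem_univ _, a, ?_⟩
    exact (le0 _).1 ((flag_min_le r (n+1) T hT1 a 0).2 ha)
  · intro c hc
    funext a
    have := flag_min_eq (n+1) (c a)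
    simpa using this
  · intro T hT
    obtain ⟨-, hT1, hT2⟩ := Finset.mem_filter.1 hT
    funext i
    ext a
    have := flag_min_le r (n+1) T hT1 a i
    simpa using this
  · intro c hc
    obtain ⟨a, ha⟩ := (Finset.mem_filter.1 hc).2
    rw [flag_prod, Fin.prod_univ_succ, Fin.prod_univ_succ, ← mul_assoc]
    congr 1
    · have hz : (⟨0, hℓ⟩ : Fin (n+1)) = 0 := rfl
      have hpos : 0 < (Finset.univ.filter (fun a =>
          c a = ((0 : Fin (n+1)) : WithTop (Fin (n+1))))).card :=
        Finset.card_pos.2 ⟨a, by simp [ha]⟩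
      simp only [le0]
      rw [hz, if_pos (by simp), ← pow_succ', Nat.sub_add_cancel hpos]
    · apply Finset.prod_congr rfl
      intro i _
      congr 1
      rw [if_neg (by simp)]
      have hi : (⟨(Fin.succ i).val - 1,
          Nat.lt_of_le_of_lt (Nat.sub_le _ _) (Fin.succ i).isLt⟩ : Fin (n+1)) = i.castSucc := by
        ext; simp
      rw [hi, ← Finset.card_sdiff_of_subset]
      · congr 1
        ext b
        simp only [Finset.mem_filter, Finset.mem_sdiff, Finset.mem_univ, true_and]
        generalize c b = o
        induction o with
        | top => simp
        | coe m =>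
          simp only [WithTop.coe_le_coe, WithTop.coe_inj, Fin.ext_iff, Fin.le_def,
            Fin.val_succ, Fin.val_castSucc]
          omega
      · intro b hb
        refine Finset.mem_filter.2 ⟨Finset.mem_univ _, ?_⟩
        exact (Finset.mem_filter.1 hb).2.trans
          (WithTop.coe_le_coe.2 (Fin.castSucc_lt_succ).le)
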